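/- For every real ε > 0 there exists a constant C(ε) > 0 such that for every integer n ≥ 2 and every connected n-vertex graph G, there exists a +k additive emulator H of G with at most C(ε)·n edges, where k = ⌈C(ε) · n^{1/(3+√5) + ε}⌉. -/

import Mathlib

open SimpleGraph

/-- The weighted distance in an emulator `H` with edge weights `w`:
the minimum total weight of a walk from `s` to `t` (`⊤` if none exists). -/
noncomputable def emulatorDist {V : Type*} (H : SimpleGraph V) (w : Sym2 V → ℕ)
    (s t : V) : ℕ∞ :=
  ⨅ p : H.Walk s t, ((p.edges.map w).sum : ℕ∞)

/-- `H` (with positive integer edge weights `w`) is a `+k` additive emulator of `G`: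
for all vertices `s, t`, `dist_G(s,t) ≤ dist_H(s,t) ≤ dist_G(s,t) + k`. -/
def IsAdditiveEmulator {V : Type*} (G H : SimpleGraph V) (w : Sym2 V → ℕ)
    (k : ℕ) : Prop :=
  (∀ e ∈ H.edgeSet, 0 < w e) ∧
  ∀ s t : V, (G.dist s t : ℕ∞) ≤ emulatorDist H w s t ∧
    emulatorDist H w s t ≤ (G.dist s t : ℕ∞) + (k : ℕ∞)

/-!
Suppose that additive error `O(n ^ a)` is already achievable with linearly many edges. Growing balls
by a constant factor until their size grows only polynomially, and then selecting disjoint ones as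
in Vitali's covering lemma, clusters the graph into balls of radius at least `r` and at most `R`,
where `R` is nearly `r`. By the pigeonhole principle each ball can be cut off at a radius where its
boundary layer is thin, so that a cluster of `m` vertices has only `O(m / r)` portals on boundary
layers. If `m ≤ r ^ 2`, linearly many edges suffice to join all pairs of portals; otherwise the
emulator of error `O(m ^ a)` that is available for the cluster itself is used.

Path buying then bounds the error accumulated along a shortest path: whenever the clusters met by a
shortest path cost more than `O(R)`, insert a single shortcut that skips the expensive part. Every
shortcut serves many new pairs of clusters, weighted by their errors, so that `O(n)` shortcuts
suffice as soon as `n ≤ r ^ (6 - 4 * a)`. Hence every exponent above `1 / (6 - 4 * a)` is achievable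
too, and iterating this improvement leads to its fixed point `1 / (3 + √5)`.
-/

universe u

section ReachesWithin

/-- The weight that an emulator of `G` puts on a pair of vertices: their distance in `G`. -/
noncomputable def distWeight {V : Type*} (G : SimpleGraph V) : Sym2 V → ℕ :=
  Sym2.lift ⟨fun u v => G.dist u v, fun _ _ => G.dist_comm⟩

/-- Some walk from `u` to `v` along the pairs in `E`, each weighted by its distance in `G`, has
total weight at most `d`. Loops `s(v, v) ∈ E` are harmless: `fromEdgeSet` discards them. -/
def ReachesWithin {V : Type*} (G : SimpleGraph V) (E : Finset (Sym2 V)) (u v : V) (d : ℕ) : Prop :=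
  ∃ p : (fromEdgeSet (E : Set (Sym2 V))).Walk u v, (p.edges.map (distWeight G)).sum ≤ d

/-- The pairs in `E`, weighted by their distances in `G`, form a `+k` additive emulator of `G`. -/
def ApproximatesDist {V : Type*} (G : SimpleGraph V) (E : Finset (Sym2 V)) (k : ℕ) : Prop :=
  ∀ s t, ReachesWithin G E s t (G.dist s t + k)

variable {V : Type*} {G : SimpleGraph V} {E F : Finset (Sym2 V)} {u u' v v' w : V} {d e k M : ℕ}

lemma dist_le_sum_distWeight {H : SimpleGraph V} (hG : G.Connected) (p : H.Walk u v) :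
    G.dist u v ≤ (p.edges.map (distWeight G)).sum := by
  induction p with
  | nil => simp
  | @cons u v w _ p ih =>
    calc G.dist u w ≤ G.dist u v + G.dist v w := hG.dist_triangle
      _ ≤ G.dist u v + (p.edges.map (distWeight G)).sum := by gcongr
      _ = _ := by simp [distWeight]

namespace ReachesWithin

lemma refl (G : SimpleGraph V) (E : Finset (Sym2 V)) (v : V) (d : ℕ) : ReachesWithin G E v v d :=
  ⟨.nil, by simp⟩

lemma mono (h : ReachesWithin G E u v d) (hde : d ≤ e) : ReachesWithin G E u v e :=
  h.imp fun _ hp => hp.trans hde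

lemma mono_edges (h : ReachesWithin G E u v d) (hEF : E ⊆ F) : ReachesWithin G F u v d := by
  obtain ⟨p, hp⟩ := h
  exact ⟨p.mapLe (fromEdgeSet_mono (Finset.coe_subset.mpr hEF)), by
    rwa [Walk.edges_mapLe_eq_edges]⟩

lemma trans (huv : ReachesWithin G E u v d) (hvw : ReachesWithin G E v w e) :
    ReachesWithin G E u w (d + e) := by
  obtain ⟨p, hp⟩ := huv
  obtain ⟨q, hq⟩ := hvw
  exact ⟨p.append q, by
    rw [Walk.edges_append, List.map_append, List.sum_append]
    exact add_le_add hp hq⟩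

lemma symm (h : ReachesWithin G E u v d) : ReachesWithin G E v u d := by
  obtain ⟨p, hp⟩ := h
  exact ⟨p.reverse, by rwa [Walk.edges_reverse, List.map_reverse, List.sum_reverse]⟩

lemma of_mem (h : s(u, v) ∈ E) : ReachesWithin G E u v (G.dist u v) := by
  rcases eq_or_ne u v with rfl | huv
  · exact refl G E u _
  · have hadj : (fromEdgeSet (E : Set (Sym2 V))).Adj u v := (fromEdgeSet_adj _).mpr ⟨h, huv⟩
    exact ⟨hadj.toWalk, by simp [distWeight]⟩

lemma dist_le (hG : G.Connected) (h : ReachesWithin G E u v d) : G.dist u v ≤ d :=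
  let ⟨p, hp⟩ := h
  (dist_le_sum_distWeight hG p).trans hp

lemma of_near (h : ReachesWithin G E u v (G.dist u v + k)) (hG : G.Connected)
    (hu : ReachesWithin G E u u' M) (hv : ReachesWithin G E v v' M) :
    ReachesWithin G E u' v' (G.dist u' v' + (k + 4 * M)) := by
  refine ((hu.symm.trans h).trans hv).mono ?_
  have huv : G.dist u v ≤ G.dist u u' + (G.dist u' v' + G.dist v' v) :=
    hG.dist_triangle.trans (Nat.add_le_add_left hG.dist_triangle _)
  have := hu.dist_le hG
  have := hv.symm.dist_le hG
  omega

lemma of_induce {B : Set V} [DecidableEq V] (hB : (G.induce B).Connected)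
    {E : Finset (Sym2 B)} {u v : B} (h : ReachesWithin (G.induce B) E u v d) :
    ReachesWithin G (E.image (Sym2.map Subtype.val)) u v d := by
  obtain ⟨p, hp⟩ := h
  let φ : fromEdgeSet (E : Set (Sym2 B)) →g
      fromEdgeSet ((E.image (Sym2.map Subtype.val) : Finset (Sym2 V)) : Set (Sym2 V)) :=
    ⟨Subtype.val, fun {x y} hxy => by
      obtain ⟨hmem, hne⟩ := (fromEdgeSet_adj _).mp hxy
      exact (fromEdgeSet_adj _).mpr
        ⟨Finset.mem_image_of_mem (Sym2.map Subtype.val) hmem, Subtype.coe_injective.ne hne⟩⟩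
  have hweight (e : Sym2 B) : distWeight G (e.map Subtype.val) ≤ distWeight (G.induce B) e := by
    induction e with
    | _ x y =>
      obtain ⟨q, hq⟩ := hB.exists_walk_length_eq_dist x y
      calc G.dist (x : V) y ≤ (q.map (Embedding.induce B).toHom).length := SimpleGraph.dist_le _
        _ = (G.induce B).dist x y := by rw [Walk.length_map, hq]
  refine ⟨p.map φ, le_trans ?_ hp⟩
  rw [Walk.edges_map, List.map_map]
  exact List.sum_le_sum fun e _ => hweight e

end ReachesWithin

lemma ApproximatesDist.mono (h : ApproximatesDist G E d) (hde : d ≤ e) : ApproximatesDist G E e :=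
  fun s t => (h s t).mono (Nat.add_le_add_left hde _)

lemma ApproximatesDist.isAdditiveEmulator (h : ApproximatesDist G E k) (hG : G.Connected) :
    IsAdditiveEmulator G (fromEdgeSet (E : Set (Sym2 V))) (distWeight G) k := by
  refine ⟨fun e he => ?_, fun s t => ⟨le_iInf fun p => ?_, ?_⟩⟩
  · induction e with
    | _ u v => exact hG.pos_dist_of_ne ((mem_edgeSet _).mp he).ne
  · exact_mod_cast dist_le_sum_distWeight hG p
  · obtain ⟨p, hp⟩ := h s t
    exact (iInf_le _ p).trans (by exact_mod_cast hp)

lemma ncard_edgeSet_fromEdgeSet_le (E : Finset (Sym2 V)) :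
    (fromEdgeSet (E : Set (Sym2 V))).edgeSet.ncard ≤ E.card := by
  rw [edgeSet_fromEdgeSet, ← Set.ncard_coe_finset]
  exact Set.ncard_le_ncard Set.sdiff_subset E.finite_toSet

end ReachesWithin

section Geodesic

variable {V : Type*} {G : SimpleGraph V}

/-- The vertices `f 0, …, f L` form a shortest path of `G`; `f` is arbitrary beyond `L`. -/
def IsGeodesic (G : SimpleGraph V) (f : ℕ → V) (L : ℕ) : Prop :=
  ∀ ⦃i j⦄, i ≤ j → j ≤ L → G.dist (f i) (f j) = j - i

lemma IsGeodesic.adj {f : ℕ → V} {L i : ℕ} (hf : IsGeodesic G f L) (hi : i < L) :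
    G.Adj (f i) (f (i + 1)) := by
  rw [← dist_eq_one_iff_adj, hf (Nat.le_add_right i 1) hi, Nat.add_sub_cancel_left]

lemma exists_isGeodesic (hG : G.Connected) (s t : V) :
    ∃ f : ℕ → V, f 0 = s ∧ f (G.dist s t) = t ∧ IsGeodesic G f (G.dist s t) := by
  obtain ⟨p, hp⟩ := hG.exists_walk_length_eq_dist s t
  refine ⟨p.getVert, p.getVert_zero, hp ▸ p.getVert_length, fun i j hij hj => ?_⟩
  have hsub : ((p.drop i).take (j - i)).IsSubwalk p :=
    ((p.drop i).isSubwalk_take _).trans (p.isSubwalk_drop i)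
  have hend : (p.drop i).getVert (j - i) = p.getVert j := by
    rw [Walk.drop_getVert, Nat.add_sub_cancel' hij]
  rw [← hend, ← length_eq_dist_of_subwalk hp hsub, Walk.take_length, Walk.drop_length]
  omega

lemma exists_induce_walk_length_eq_dist (hG : G.Connected) {B : Set V} {u v : V}
    (hB : ∀ x, G.dist u x + G.dist x v = G.dist u v → x ∈ B) (hu : u ∈ B) (hv : v ∈ B) :
    ∃ p : (G.induce B).Walk ⟨u, hu⟩ ⟨v, hv⟩, p.length = G.dist u v := by
  classical
  obtain ⟨p, hp⟩ := hG.exists_walk_length_eq_dist u v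
  have hsupport (x) (hx : x ∈ p.support) : x ∈ B := by
    refine hB x (le_antisymm ?_ hG.dist_triangle)
    rw [← hp, ← p.take_spec hx, Walk.length_append]
    exact add_le_add (dist_le _) (dist_le _)
  refine ⟨p.induce B hsupport, ?_⟩
  rw [← hp, ← Walk.length_map (Embedding.induce B).toHom, Walk.map_induce]
  rfl

end Geodesic

section PathBuying

lemma exists_superset_of_forall_insert_gain {α : Type*} [Finite α] [DecidableEq α]
    {Φ : Finset α → ℕ} {good : Finset α → Prop} {gain bound : ℕ} (E : Finset α)
    (hbound : ∀ F, Φ F ≤ bound)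
    (hgain : ∀ F, E ⊆ F → ¬ good F → ∃ x ∉ F, Φ F + gain ≤ Φ (insert x F)) :
    ∃ F, good F ∧ F.card * gain ≤ E.card * gain + bound := by
  let affordable : Set (Finset α) := {F | E ⊆ F ∧ F.card * gain ≤ E.card * gain + Φ F}
  obtain ⟨F, ⟨hEF, hcard⟩, hmax⟩ :=
    affordable.toFinite.exists_maximal (⟨E, subset_rfl, Nat.le_add_right _ _⟩ : affordable.Nonempty)
  refine ⟨F, by_contra fun hbad => ?_, hcard.trans (Nat.add_le_add_left (hbound F) _)⟩
  obtain ⟨x, hx, hΦ⟩ := hgain F hEF hbad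
  have hinsert : insert x F ∈ affordable := by
    refine ⟨hEF.trans (F.subset_insert x), ?_⟩
    rw [Finset.card_insert_of_notMem hx, add_one_mul]
    omega
  exact hx (hmax hinsert (F.subset_insert x) (F.mem_insert_self x))

variable {V : Type*} {G : SimpleGraph V} {E F : Finset (Sym2 V)} {center : V → V} {err : V → ℕ}
  {portals : Set V} {f : ℕ → V} {L M R : ℕ}

/-- The fibers of `center` cluster the vertices of `G` so that the pairs in `E` cross every cluster
between two of its portals with additive error `err`, where all edges between different clusters
join portals. The coarse error `M` is available without passing through portals. -/
structure IsPortalClustering (G : SimpleGraph V) (E : Finset (Sym2 V)) (center : V → V)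
    (err : V → ℕ) (portals : Set V) (M : ℕ) : Prop where
  reaches_center (v : V) : ReachesWithin G E v (center v) M
  reaches_of_adj {u v : V} : G.Adj u v → ReachesWithin G E u v (2 * M)
  mem_portals {u v : V} : G.Adj u v → center u ≠ center v → u ∈ portals
  reaches_of_adj_of_center_ne {u v : V} : G.Adj u v → center u ≠ center v →
    ReachesWithin G E u v (1 + err (center u) + err (center v))
  reaches_of_portals {u v : V} : center u = center v → u ∈ portals → v ∈ portals →
    ReachesWithin G E u v (G.dist u v + err (center u))

open scoped Classical in
/-- The centers of the clusters met by `f i, …, f j`. -/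
noncomputable def visitedCenters (center : V → V) (f : ℕ → V) (i j : ℕ) : Finset V :=
  (Finset.Icc i j).image (center ∘ f)

/-- The total error of the clusters met by `f i, …, f j`, each counted once. -/
noncomputable def visitCost (center : V → V) (err : V → ℕ) (f : ℕ → V) (i j : ℕ) : ℕ :=
  ∑ c ∈ visitedCenters center f i j, err c

lemma mem_visitedCenters {i j : ℕ} {c : V} :
    c ∈ visitedCenters center f i j ↔ ∃ k, (i ≤ k ∧ k ≤ j) ∧ center (f k) = c := by
  simp [visitedCenters]

lemma visitedCenters_mono {i i' j j' : ℕ} (hi : i' ≤ i) (hj : j ≤ j') :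
    visitedCenters center f i j ⊆ visitedCenters center f i' j' := by
  classical exact Finset.image_subset_image (Finset.Icc_subset_Icc hi hj)

lemma visitCost_mono {i i' j j' : ℕ} (hi : i' ≤ i) (hj : j ≤ j') :
    visitCost center err f i j ≤ visitCost center err f i' j' :=
  Finset.sum_le_sum_of_subset (visitedCenters_mono hi hj)

lemma exists_last_visit (center : V → V) (f : ℕ → V) {i j : ℕ} (hij : i ≤ j) :
    ∃ k, i ≤ k ∧ k ≤ j ∧ center (f k) = center (f i) ∧
      center (f i) ∉ visitedCenters center f (k + 1) j := by
  classical
  let sameCluster (k : ℕ) : Prop := center (f k) = center (f i)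
  refine ⟨Nat.findGreatest sameCluster j, Nat.le_findGreatest hij rfl, Nat.findGreatest_le j,
    Nat.findGreatest_spec (P := sameCluster) hij rfl, fun hmem => ?_⟩
  obtain ⟨k, ⟨hlast, hkj⟩, hk⟩ := mem_visitedCenters.mp hmem
  exact Nat.findGreatest_is_greatest (P := sameCluster) hlast hkj hk

namespace IsPortalClustering

lemma mono (h : IsPortalClustering G E center err portals M) (hEF : E ⊆ F) :
    IsPortalClustering G F center err portals M where
  reaches_center v := (h.reaches_center v).mono_edges hEF
  reaches_of_adj hadj := (h.reaches_of_adj hadj).mono_edges hEF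
  mem_portals := h.mem_portals
  reaches_of_adj_of_center_ne hadj hne := (h.reaches_of_adj_of_center_ne hadj hne).mono_edges hEF
  reaches_of_portals huv hu hv := (h.reaches_of_portals huv hu hv).mono_edges hEF

lemma reaches_of_center_eq (h : IsPortalClustering G E center err portals M) {u v : V}
    (huv : center u = center v) : ReachesWithin G E u v (2 * M) := by
  have hu := h.reaches_center u
  rw [huv] at hu
  exact (hu.trans (h.reaches_center v).symm).mono (by omega)

-- Every cluster is left for good after its last visit, so it is charged at most three times: when
-- it is entered, crossed and left. The cluster of `f i` is not entered, hence the factor `2`.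
lemma reaches_of_mem_portals (h : IsPortalClustering G E center err portals M)
    [DecidableEq V] (hf : IsGeodesic G f L) {i j : ℕ} (hij : i ≤ j) (hj : j ≤ L)
    (hi : f i ∈ portals) :
    ReachesWithin G E (f i) (f j) ((j - i) + (2 * err (center (f i)) +
      3 * ∑ c ∈ (visitedCenters center f i j).erase (center (f i)), err c) + 2 * M) := by
  induction hlen : j - i using Nat.strong_induction_on generalizing i with
  | _ n ih =>
  obtain ⟨k, hik, hkj, hk, hleft⟩ := exists_last_visit center f hij
  rcases hkj.eq_or_lt with rfl | hkj
  · exact (h.reaches_of_center_eq hk.symm).mono (by omega)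
  have hadj := hf.adj (hkj.trans_le hj)
  have hne : center (f k) ≠ center (f (k + 1)) := fun heq =>
    hleft (mem_visitedCenters.mpr ⟨k + 1, ⟨le_rfl, hkj⟩, heq ▸ hk⟩)
  have hcross := h.reaches_of_portals hk.symm hi (h.mem_portals hadj hne)
  rw [hf hik (by omega)] at hcross
  have hrest := ih (j - (k + 1)) (by omega) (i := k + 1) hkj (h.mem_portals hadj.symm hne.symm) rfl
  refine ((hcross.trans (h.reaches_of_adj_of_center_ne hadj hne)).trans hrest).mono ?_
  have hnext := Finset.add_sum_erase _ err
    (mem_visitedCenters.mpr ⟨k + 1, ⟨le_rfl, hkj⟩, rfl⟩ :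
      center (f (k + 1)) ∈ visitedCenters center f (k + 1) j)
  have hsum : ∑ c ∈ visitedCenters center f (k + 1) j, err c ≤
      ∑ c ∈ (visitedCenters center f i j).erase (center (f i)), err c :=
    Finset.sum_le_sum_of_subset (Finset.subset_erase.mpr
      ⟨visitedCenters_mono (by omega) le_rfl, hleft⟩)
  rw [hk]
  omega

lemma reaches_add_visitCost (h : IsPortalClustering G E center err portals M)
    (hf : IsGeodesic G f L) {i j : ℕ} (hij : i ≤ j) (hj : j ≤ L) :
    ReachesWithin G E (f i) (f j) ((j - i) + 3 * visitCost center err f i j + 6 * M) := by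
  classical
  obtain ⟨k, hik, hkj, hk, hleft⟩ := exists_last_visit center f hij
  rcases hkj.eq_or_lt with rfl | hkj
  · exact (h.reaches_of_center_eq hk.symm).mono (by omega)
  have hadj := hf.adj (hkj.trans_le hj)
  have hmem : center (f (k + 1)) ∈ visitedCenters center f (k + 1) j :=
    mem_visitedCenters.mpr ⟨k + 1, ⟨le_rfl, hkj⟩, rfl⟩
  have hne : center (f k) ≠ center (f (k + 1)) := fun heq => hleft (hk ▸ heq ▸ hmem)
  have hrest := h.reaches_of_mem_portals hf (i := k + 1) hkj hj (h.mem_portals hadj.symm hne.symm)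
  refine (((h.reaches_of_center_eq hk.symm).trans (h.reaches_of_adj hadj)).trans hrest).mono ?_
  have hnext := Finset.add_sum_erase _ err hmem
  have hcost : visitCost center err f (k + 1) j ≤ visitCost center err f i j :=
    visitCost_mono (by omega) le_rfl
  rw [visitCost] at hcost
  omega

lemma reaches_of_visitCost_prefix_le (h : IsPortalClustering G E center err portals M)
    (hf : IsGeodesic G f L) {i j x : ℕ} (hij : i ≤ j) (hjx : j ≤ x) (hx : x ≤ L)
    (hcost : ∀ k < x, visitCost center err f 0 k ≤ R) :
    ReachesWithin G E (f i) (f j) ((j - i) + (3 * R + 8 * M)) := by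
  rcases hij.eq_or_lt with rfl | hij
  · exact .refl G E _ _
  obtain ⟨j, rfl⟩ : ∃ j', j = j' + 1 := ⟨j - 1, by omega⟩
  have hbefore := h.reaches_add_visitCost hf (Nat.lt_succ_iff.mp hij) (by omega)
  refine (hbefore.trans (h.reaches_of_adj (hf.adj (by omega)))).mono ?_
  have := (visitCost_mono (Nat.zero_le i) le_rfl).trans (hcost j (by omega))
  omega

lemma reaches_of_visitCost_suffix_le (h : IsPortalClustering G E center err portals M)
    (hf : IsGeodesic G f L) {i j y : ℕ} (hij : i ≤ j) (hyi : y ≤ i) (hj : j ≤ L)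
    (hcost : ∀ k, y < k → k ≤ L → visitCost center err f k L ≤ R) :
    ReachesWithin G E (f i) (f j) ((j - i) + (3 * R + 8 * M)) := by
  rcases hij.eq_or_lt with rfl | hij
  · exact .refl G E _ _
  have hafter := h.reaches_add_visitCost hf (i := i + 1) hij hj
  refine ((h.reaches_of_adj (hf.adj (by omega))).trans hafter).mono ?_
  have := (visitCost_mono le_rfl hj).trans (hcost (i + 1) (by omega) (by omega))
  omega

end IsPortalClustering

lemma exists_first_and_last_visitCost_gt (hcost : R < visitCost center err f 0 L) :
    ∃ x y, (x ≤ L ∧ R < visitCost center err f 0 x ∧ ∀ k < x, visitCost center err f 0 k ≤ R) ∧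
      y ≤ L ∧ R < visitCost center err f y L ∧
        ∀ k, y < k → k ≤ L → visitCost center err f k L ≤ R := by
  classical
  have hex : ∃ x, R < visitCost center err f 0 x := ⟨L, hcost⟩
  let P (y : ℕ) : Prop := R < visitCost center err f y L
  exact ⟨Nat.find hex, Nat.findGreatest P L,
    ⟨Nat.find_min' hex hcost, Nat.find_spec hex, fun k hk => not_lt.mp (Nat.find_min hex hk)⟩,
    Nat.findGreatest_le L, Nat.findGreatest_spec (P := P) (Nat.zero_le L) hcost,
    fun k hk hkL => not_lt.mp (Nat.findGreatest_is_greatest (P := P) hk hkL)⟩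

namespace IsPortalClustering

lemma reaches_of_reaches_centers (h : IsPortalClustering G E center err portals M)
    (hG : G.Connected) (hf : IsGeodesic G f L) {i j x y : ℕ} (hix : i ≤ x) (hxy : x ≤ y)
    (hyj : y ≤ j) (hj : j ≤ L) (hprefix : ∀ k < x, visitCost center err f 0 k ≤ R)
    (hsuffix : ∀ k, y < k → k ≤ L → visitCost center err f k L ≤ R)
    (hcenters : ReachesWithin G E (center (f i)) (center (f j))
      (G.dist (center (f i)) (center (f j)) + (6 * R + 20 * M))) :
    ReachesWithin G E (f 0) (f L) (L + (12 * R + 40 * M)) := by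
  have hstart := h.reaches_of_visitCost_prefix_le hf i.zero_le hix (by omega) hprefix
  have hmiddle := hcenters.of_near hG (h.reaches_center _).symm (h.reaches_center _).symm
  have hend := h.reaches_of_visitCost_suffix_le hf hj hyj le_rfl hsuffix
  rw [hf (by omega : i ≤ j) hj] at hmiddle
  exact ((hstart.trans hmiddle).trans hend).mono (by omega)

lemma reaches_centers_of_mem (h : IsPortalClustering G E center err portals M)
    (hG : G.Connected) (hf : IsGeodesic G f L) {i j x y : ℕ} (hix : i ≤ x) (hxy : x ≤ y)
    (hyj : y ≤ j) (hj : j ≤ L) (hprefix : ∀ k < x, visitCost center err f 0 k ≤ R)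
    (hsuffix : ∀ k, y < k → k ≤ L → visitCost center err f k L ≤ R)
    (hmem : s(f x, f y) ∈ E) :
    ReachesWithin G E (center (f i)) (center (f j))
      (G.dist (center (f i)) (center (f j)) + (6 * R + 20 * M)) := by
  have hstart := h.reaches_of_visitCost_prefix_le hf hix le_rfl (by omega) hprefix
  have hshortcut := ReachesWithin.of_mem (G := G) hmem
  have hend := h.reaches_of_visitCost_suffix_le hf hyj le_rfl hj hsuffix
  have hpath : ReachesWithin G E (f i) (f j) (G.dist (f i) (f j) + (6 * R + 16 * M)) := by
    refine ((hstart.trans hshortcut).trans hend).mono ?_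
    rw [hf hxy (by omega), hf (by omega : i ≤ j) hj]
    omega
  exact (hpath.of_near hG (h.reaches_center _) (h.reaches_center _)).mono (by omega)

end IsPortalClustering

section Potential

variable [Fintype V]

open scoped Classical in
/-- The pairs of vertices between which `E` already has additive error at most `k`. -/
noncomputable def satisfiedPairs (G : SimpleGraph V) (E : Finset (Sym2 V)) (k : ℕ) :
    Finset (V × V) :=
  {p | ReachesWithin G E p.1 p.2 (G.dist p.1 p.2 + k)}

/-- The potential function of path buying: satisfied pairs of centers, weighted by the product of
their errors. -/
noncomputable def potential (G : SimpleGraph V) (err : V → ℕ) (k : ℕ) (E : Finset (Sym2 V)) : ℕ :=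
  ∑ p ∈ satisfiedPairs G E k, err p.1 * err p.2

lemma mem_satisfiedPairs {k : ℕ} {p : V × V} :
    p ∈ satisfiedPairs G E k ↔ ReachesWithin G E p.1 p.2 (G.dist p.1 p.2 + k) := by
  simp [satisfiedPairs]

lemma potential_le (G : SimpleGraph V) (err : V → ℕ) (k : ℕ) (E : Finset (Sym2 V)) :
    potential G err k E ≤ (∑ c, err c) ^ 2 :=
  calc potential G err k E ≤ ∑ p : V × V, err p.1 * err p.2 :=
        Finset.sum_le_sum_of_subset (Finset.subset_univ _)
    _ = (∑ c, err c) ^ 2 := by rw [sq, Fintype.sum_mul_sum, Fintype.sum_prod_type]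

lemma potential_add_mul_le {k : ℕ} (hEF : E ⊆ F) {A B : Finset V}
    (hE : ∀ a ∈ A, ∀ b ∈ B, ¬ ReachesWithin G E a b (G.dist a b + k))
    (hF : ∀ a ∈ A, ∀ b ∈ B, ReachesWithin G F a b (G.dist a b + k)) :
    potential G err k E + (∑ a ∈ A, err a) * ∑ b ∈ B, err b ≤ potential G err k F := by
  classical
  have hdisj : Disjoint (satisfiedPairs G E k) (A ×ˢ B) :=
    Finset.disjoint_right.mpr fun p hp hmem =>
      hE _ (Finset.mem_product.mp hp).1 _ (Finset.mem_product.mp hp).2 (mem_satisfiedPairs.mp hmem)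
  have hsub : satisfiedPairs G E k ∪ A ×ˢ B ⊆ satisfiedPairs G F k := by
    refine Finset.union_subset (fun p hp => ?_) (fun p hp => ?_)
    · exact mem_satisfiedPairs.mpr ((mem_satisfiedPairs.mp hp).mono_edges hEF)
    · exact mem_satisfiedPairs.mpr
        (hF _ (Finset.mem_product.mp hp).1 _ (Finset.mem_product.mp hp).2)
  rw [potential, Finset.sum_mul_sum, ← Finset.sum_product', ← Finset.sum_union hdisj]
  exact Finset.sum_le_sum_of_subset hsub

-- On a geodesic between a badly served pair, buy the shortcut that skips the part between the
-- first and the last point where the clusters seen from the respective end cost more than `R`.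
lemma IsPortalClustering.exists_insert_gain [DecidableEq V]
    (h : IsPortalClustering G E center err portals M)
    (hG : G.Connected) (hbad : ¬ ApproximatesDist G E (12 * R + 40 * M)) :
    ∃ e ∉ E, potential G err (6 * R + 20 * M) E + (R + 1) ^ 2 ≤
      potential G err (6 * R + 20 * M) (insert e E) := by
  simp only [ApproximatesDist, not_forall] at hbad
  obtain ⟨s, t, hst⟩ := hbad
  obtain ⟨f, hs, ht, hf⟩ := exists_isGeodesic hG s t
  generalize G.dist s t = L at hst ht hf
  subst hs ht
  have hcost : R < visitCost center err f 0 L := by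
    by_contra! hle
    exact hst ((h.reaches_add_visitCost hf L.zero_le le_rfl).mono (by omega))
  obtain ⟨x, y, ⟨hxL, hx, hprefix⟩, hyL, hy, hsuffix⟩ := exists_first_and_last_visitCost_gt hcost
  have hxy : x ≤ y := by
    by_contra! hyx
    have hstart := h.reaches_of_visitCost_prefix_le hf x.zero_le le_rfl hxL hprefix
    have hend := h.reaches_of_visitCost_suffix_le hf hxL hyx.le le_rfl hsuffix
    exact hst ((hstart.trans hend).mono (by omega))
  have hunsat : ∀ c ∈ visitedCenters center f 0 x, ∀ c' ∈ visitedCenters center f y L,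
      ¬ ReachesWithin G E c c' (G.dist c c' + (6 * R + 20 * M)) := by
    intro c hc c' hc' hcenters
    obtain ⟨i, ⟨-, hix⟩, rfl⟩ := mem_visitedCenters.mp hc
    obtain ⟨j, ⟨hyj, hjL⟩, rfl⟩ := mem_visitedCenters.mp hc'
    exact hst (h.reaches_of_reaches_centers hG hf hix hxy hyj hjL hprefix hsuffix hcenters)
  have hsat {F : Finset (Sym2 V)} (hEF : E ⊆ F) (hmem : s(f x, f y) ∈ F) :
      ∀ c ∈ visitedCenters center f 0 x, ∀ c' ∈ visitedCenters center f y L,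
        ReachesWithin G F c c' (G.dist c c' + (6 * R + 20 * M)) := by
    intro c hc c' hc'
    obtain ⟨i, ⟨-, hix⟩, rfl⟩ := mem_visitedCenters.mp hc
    obtain ⟨j, ⟨hyj, hjL⟩, rfl⟩ := mem_visitedCenters.mp hc'
    exact (h.mono hEF).reaches_centers_of_mem hG hf hix hxy hyj hjL hprefix hsuffix hmem
  refine ⟨s(f x, f y), fun hmem => ?_, ?_⟩
  · have hcx : center (f x) ∈ visitedCenters center f 0 x :=
      mem_visitedCenters.mpr ⟨x, ⟨x.zero_le, le_rfl⟩, rfl⟩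
    have hcy : center (f y) ∈ visitedCenters center f y L :=
      mem_visitedCenters.mpr ⟨y, ⟨le_rfl, hyL⟩, rfl⟩
    exact hunsat _ hcx _ hcy (hsat subset_rfl hmem _ hcx _ hcy)
  · have hinsert := Finset.subset_insert s(f x, f y) E
    refine le_trans (Nat.add_le_add_left ?_ _) (potential_add_mul_le hinsert hunsat
      (hsat hinsert (Finset.mem_insert_self _ _)))
    exact (sq (R + 1)).trans_le (Nat.mul_le_mul hx hy)

theorem IsPortalClustering.exists_approximatesDist
    (h : IsPortalClustering G E center err portals M) (hG : G.Connected) (R : ℕ) :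
    ∃ F, ApproximatesDist G F (12 * R + 40 * M) ∧
      F.card * (R + 1) ^ 2 ≤ E.card * (R + 1) ^ 2 + (∑ c, err c) ^ 2 := by
  classical
  exact exists_superset_of_forall_insert_gain E (potential_le G err (6 * R + 20 * M))
    fun F hEF hbad => (h.mono hEF).exists_insert_gain hG hbad

end Potential

end PathBuying

section Balls

variable {V : Type*} [Fintype V] {G : SimpleGraph V}

open scoped Classical in
/-- The closed ball of radius `d` around `c`. Since `dist` is `0` between unreachable vertices, it
also contains the other connected components of `G`. -/
noncomputable def distBall (G : SimpleGraph V) (c : V) (d : ℕ) : Finset V :=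
  {v | G.dist c v ≤ d}

open scoped Classical in
/-- The vertices at distance `l` or `l + 1` from `c`; they include both ends of every edge that
leaves the ball of radius `l`. -/
noncomputable def boundaryLayer (G : SimpleGraph V) (c : V) (l : ℕ) : Finset V :=
  {v | G.dist c v = l ∨ G.dist c v = l + 1}

@[simp]
lemma mem_distBall {c v : V} {d : ℕ} : v ∈ distBall G c d ↔ G.dist c v ≤ d := by
  simp [distBall]

@[simp]
lemma mem_boundaryLayer {c v : V} {l : ℕ} :
    v ∈ boundaryLayer G c l ↔ G.dist c v = l ∨ G.dist c v = l + 1 := by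
  simp [boundaryLayer]

lemma exists_succ_le_mul_of_bounded {a : ℕ → ℕ} {q B : ℕ} (hq : 1 < q) (ha : 0 < a 0)
    (hB : ∀ j, a j ≤ B) : ∃ j, a (j + 1) ≤ q * a j ∧ q ^ j ≤ B := by
  have hgrow (j : ℕ) (h : ∀ i < j, q * a i < a (i + 1)) : q ^ j ≤ a j := by
    induction j with
    | zero => exact (pow_zero q).trans_le ha
    | succ j ih =>
      calc q ^ (j + 1) = q * q ^ j := pow_succ' q j
        _ ≤ q * a j := Nat.mul_le_mul_left q (ih fun i hi => h i (hi.trans j.lt_succ_self))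
        _ ≤ a (j + 1) := (h j j.lt_succ_self).le
  have hex : ∃ j, a (j + 1) ≤ q * a j := by
    by_contra! hlt
    exact (Nat.lt_pow_self hq).not_ge ((hgrow B fun i _ => hlt i).trans (hB B))
  classical
  exact ⟨Nat.find hex, Nat.find_spec hex,
    (hgrow _ fun i hi => not_le.mp (Nat.find_min hex hi)).trans (hB _)⟩

lemma exists_radius_card_distBall_le (G : SimpleGraph V) (v : V) {q N : ℕ} (hq : 1 < q)
    (hN : N ≠ 0) (r : ℕ) :
    ∃ ρ, r ≤ ρ ∧ ρ ^ N ≤ Fintype.card V * r ^ N ∧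
      (distBall G v (q * ρ)).card ≤ q ^ N * (distBall G v ρ).card := by
  obtain ⟨j, hgrowth, hpow⟩ := exists_succ_le_mul_of_bounded
    (a := fun j => (distBall G v (q ^ j * r)).card) (Nat.one_lt_pow hN hq)
    (Finset.card_pos.mpr ⟨v, by simp⟩) (fun _ => Finset.card_le_univ _)
  refine ⟨q ^ j * r, Nat.le_mul_of_pos_left r (by positivity), ?_, ?_⟩
  · rw [mul_pow, pow_right_comm]
    exact Nat.mul_le_mul_right _ hpow
  · rwa [← mul_assoc, ← pow_succ']

lemma exists_card_boundaryLayer_mul_le (G : SimpleGraph V) (v : V) (a : ℕ) {m : ℕ} (hm : m ≠ 0) :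
    ∃ l, a ≤ l ∧ l + 1 < a + 2 * m ∧
      (boundaryLayer G v l).card * m ≤ (distBall G v (a + 2 * m)).card := by
  classical
  have hdisj : (Finset.range m : Set ℕ).PairwiseDisjoint
      fun i => boundaryLayer G v (a + 2 * i) := by
    intro i _ j _ hij
    refine Finset.disjoint_left.mpr fun u hi hj => ?_
    rw [mem_boundaryLayer] at hi hj
    omega
  have hsub : (Finset.range m).biUnion (fun i => boundaryLayer G v (a + 2 * i)) ⊆
      distBall G v (a + 2 * m) := by
    refine Finset.biUnion_subset.mpr fun i hi u hu => ?_
    rw [Finset.mem_range] at hi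
    rw [mem_boundaryLayer] at hu
    rw [mem_distBall]
    omega
  have hsum : ∑ i ∈ Finset.range m, (boundaryLayer G v (a + 2 * i)).card * m ≤
      ∑ _i ∈ Finset.range m, (distBall G v (a + 2 * m)).card := by
    rw [← Finset.sum_mul, ← Finset.card_biUnion hdisj, Finset.sum_const, Finset.card_range,
      smul_eq_mul, mul_comm]
    exact Nat.mul_le_mul_left m (Finset.card_le_card hsub)
  obtain ⟨i, hi, hcard⟩ := Finset.exists_le_of_sum_le (Finset.nonempty_range_iff.mpr hm) hsum
  rw [Finset.mem_range] at hi
  exact ⟨a + 2 * i, by omega, by omega, hcard⟩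

lemma exists_pairwiseDisjoint_distBall_cover (hG : G.Connected) (ρ : V → ℕ) :
    ∃ T : Finset V, (T : Set V).PairwiseDisjoint (fun c => distBall G c (ρ c)) ∧
      ∀ v, ∃ c ∈ T, G.dist c v ≤ 3 * ρ c := by
  classical
  obtain ⟨T, -, hdisj, hmeet⟩ := Vitali.exists_disjoint_subfamily_covering_enlargement
    (fun v => (distBall G v (ρ v) : Set V)) Set.univ (fun v => (ρ v : ℝ)) 2 one_lt_two
    (fun v _ => (ρ v).cast_nonneg) (Finset.univ.sup ρ : ℕ)
    (fun v _ => Nat.cast_le.mpr (Finset.le_sup (Finset.mem_univ v)))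
    (fun v _ => ⟨v, by simp⟩)
  refine ⟨T.toFinset, fun c hc c' hc' hne => ?_, fun v => ?_⟩
  · exact Finset.disjoint_coe.mp (hdisj (Set.mem_toFinset.mp hc) (Set.mem_toFinset.mp hc') hne)
  · obtain ⟨c, hc, ⟨x, hxv, hxc⟩, hle⟩ := hmeet v (Set.mem_univ v)
    refine ⟨c, Set.mem_toFinset.mpr hc, ?_⟩
    have hradius : ρ v ≤ 2 * ρ c := by exact_mod_cast hle
    have hcv : G.dist c v ≤ G.dist c x + G.dist v x := by
      simpa only [G.dist_comm (u := x)] using hG.dist_triangle (u := c) (v := x) (w := v)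
    rw [Finset.mem_coe, mem_distBall] at hxv hxc
    omega

lemma connected_induce_distBall (hG : G.Connected) (c : V) (D : ℕ) :
    (G.induce (distBall G c D : Set V)).Connected := by
  have hc : c ∈ (distBall G c D : Set V) := by simp
  have : Nonempty (distBall G c D : Set V) := ⟨⟨c, hc⟩⟩
  have hreach (x : (distBall G c D : Set V)) :
      (G.induce (distBall G c D : Set V)).Reachable ⟨c, hc⟩ x := by
    obtain ⟨x, hx⟩ := x
    obtain ⟨p, -⟩ := exists_induce_walk_length_eq_dist hG (B := (distBall G c D : Set V))
      (fun y hy => by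
        rw [Finset.mem_coe, mem_distBall] at hx ⊢
        omega) hc hx
    exact ⟨p⟩
  exact ⟨fun x y => (hreach x).symm.trans (hreach y)⟩

lemma dist_induce_distBall_le (hG : G.Connected) {c : V} {D : ℕ}
    {s t : (distBall G c D : Set V)} (hs : 2 * G.dist c s ≤ D) (ht : 2 * G.dist c t ≤ D) :
    (G.induce (distBall G c D : Set V)).dist s t ≤ G.dist (s : V) t := by
  obtain ⟨s, hsB⟩ := s
  obtain ⟨t, htB⟩ := t
  obtain ⟨p, hp⟩ := exists_induce_walk_length_eq_dist hG (B := (distBall G c D : Set V))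
    (fun x hx => by
      rw [Finset.mem_coe, mem_distBall]
      have hcsx := hG.dist_triangle (u := c) (v := s) (w := x)
      have hctx := hG.dist_triangle (u := c) (v := t) (w := x)
      have hsct := hG.dist_triangle (u := s) (v := c) (w := t)
      rw [G.dist_comm (u := s) (v := c)] at hsct
      rw [G.dist_comm (u := t) (v := x)] at hctx
      dsimp only at hs ht
      omega) hsB htB
  exact hp ▸ dist_le p

end Balls

section EmulatorBound

/-- Every connected graph on `n` vertices has an emulator with at most `C * n` edges and additive
error at most `C * n ^ a`. -/
def LinearEmulatorBound (C a : ℝ) : Prop :=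
  ∀ (V : Type u) [Fintype V] (G : SimpleGraph V), G.Connected →
    ∃ (E : Finset (Sym2 V)) (k : ℕ), (E.card : ℝ) ≤ C * Fintype.card V ∧
      (k : ℝ) ≤ C * (Fintype.card V : ℝ) ^ a ∧ ApproximatesDist G E k

lemma LinearEmulatorBound.exists_distBall_emulator {C a : ℝ} (h : LinearEmulatorBound.{u} C a)
    {V : Type u} [Fintype V] {G : SimpleGraph V} (hG : G.Connected) (c : V) (D : ℕ) :
    ∃ (E : Finset (Sym2 V)) (k : ℕ), (E.card : ℝ) ≤ C * (distBall G c D).card ∧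
      (k : ℝ) ≤ C * ((distBall G c D).card : ℝ) ^ a ∧
      ∀ s t, 2 * G.dist c s ≤ D → 2 * G.dist c t ≤ D →
        ReachesWithin G E s t (G.dist s t + k) := by
  classical
  let B : Set V := distBall G c D
  have hB : (G.induce B).Connected := connected_induce_distBall hG c D
  obtain ⟨E, k, hE, hk, happrox⟩ := h B (G.induce B) hB
  have hcard : Fintype.card B = (distBall G c D).card := Fintype.card_coe _
  rw [hcard] at hE hk
  refine ⟨E.image (Sym2.map Subtype.val), k, le_trans ?_ hE, hk, fun s t hs ht => ?_⟩
  · exact_mod_cast Finset.card_image_le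
  · have hsB : s ∈ B := Finset.mem_coe.mpr (mem_distBall.mpr (by omega))
    have htB : t ∈ B := Finset.mem_coe.mpr (mem_distBall.mpr (by omega))
    refine ((happrox ⟨s, hsB⟩ ⟨t, htB⟩).of_induce hB).mono (Nat.add_le_add_right ?_ k)
    exact dist_induce_distBall_le hG hs ht

end EmulatorBound

section BallCover

/-- Vertices `centers` whose balls of radius `radius` are disjoint and whose balls of radius `layer`
cover `G`. The balls grow by a factor of at most `K` on enlarging the radius `11`-fold, and the
boundary layers at distance `layer` are thin. -/
structure BallCover {V : Type*} [Fintype V] (G : SimpleGraph V) (K r R : ℕ) where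
  centers : Finset V
  radius : V → ℕ
  layer : V → ℕ
  le_radius (c : V) : r ≤ radius c
  radius_le (c : V) : radius c ≤ R
  card_distBall_le (c : V) :
    (distBall G c (11 * radius c)).card ≤ K * (distBall G c (radius c)).card
  layer_lt (c : V) : layer c + 1 ≤ 5 * radius c
  card_layer_mul_le (c : V) :
    (boundaryLayer G c (layer c)).card * radius c ≤ (distBall G c (5 * radius c)).card
  pairwiseDisjoint : (centers : Set V).PairwiseDisjoint fun c => distBall G c (radius c)
  exists_dist_le_layer (v : V) : ∃ c ∈ centers, G.dist c v ≤ layer c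

variable {V : Type*} [Fintype V] {G : SimpleGraph V} {K r R : ℕ}

lemma exists_ballCover (hG : G.Connected) {N : ℕ} (hN : N ≠ 0) (hr : r ≠ 0)
    (hR : ∀ ρ : ℕ, ρ ^ N ≤ Fintype.card V * r ^ N → ρ ≤ R) :
    Nonempty (BallCover G (11 ^ N) r R) := by
  choose ρ hrρ hρpow hρgrowth using
    fun v => exists_radius_card_distBall_le G v (q := 11) (by norm_num) hN r
  have hρ (v : V) : ρ v ≠ 0 := ((Nat.pos_of_ne_zero hr).trans_le (hrρ v)).ne'
  choose l hl hl' hlayer using fun v => exists_card_boundaryLayer_mul_le G v (3 * ρ v) (hρ v)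
  simp only [show ∀ v, 3 * ρ v + 2 * ρ v = 5 * ρ v from fun v => by ring] at hl' hlayer
  obtain ⟨T, hdisj, hcover⟩ := exists_pairwiseDisjoint_distBall_cover hG ρ
  exact ⟨{
    centers := T
    radius := ρ
    layer := l
    le_radius := hrρ
    radius_le := fun v => hR _ (hρpow v)
    card_distBall_le := hρgrowth
    layer_lt := fun v => (hl' v).le
    card_layer_mul_le := hlayer
    pairwiseDisjoint := hdisj
    exists_dist_le_layer := fun v => (hcover v).imp fun c hc => ⟨hc.1, hc.2.trans (hl c)⟩ }⟩

namespace BallCover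

/-- A linear order on the vertices in which balls of smaller radius come first. -/
noncomputable def rank (S : BallCover G K r R) (c : V) : ℕ ×ₗ Fin (Fintype.card V) :=
  toLex (S.radius c, Fintype.equivFin V c)

/-- The ball around `c` in which shortest paths between vertices of the cluster of `c` stay. -/
noncomputable def hull (S : BallCover G K r R) (c : V) : Finset V :=
  distBall G c (11 * S.radius c)

open scoped Classical in
/-- The vertices in or next to the ball of radius `layer c` around `c` that lie on the boundary
layer of a center of rank at most that of `c`. -/
noncomputable def portals (S : BallCover G K r R) (c : V) : Finset V :=
  {v | G.dist c v ≤ S.layer c + 1 ∧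
    ∃ c' ∈ S.centers, S.rank c' ≤ S.rank c ∧ v ∈ boundaryLayer G c' (S.layer c')}

variable (S : BallCover G K r R)

lemma exists_rank_minimal_center (v : V) :
    ∃ c ∈ S.centers, G.dist c v ≤ S.layer c ∧
      ∀ c' ∈ S.centers, G.dist c' v ≤ S.layer c' → S.rank c ≤ S.rank c' := by
  classical
  obtain ⟨c₀, hc₀, hdist⟩ := S.exists_dist_le_layer v
  obtain ⟨c, hc, hmin⟩ := (S.centers.filter fun c => G.dist c v ≤ S.layer c).exists_min_image
    S.rank ⟨c₀, Finset.mem_filter.mpr ⟨hc₀, hdist⟩⟩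
  obtain ⟨hcT, hcv⟩ := Finset.mem_filter.mp hc
  exact ⟨c, hcT, hcv, fun c' hc' hdist' => hmin c' (Finset.mem_filter.mpr ⟨hc', hdist'⟩)⟩

/-- The center of the cluster of `v`: the one of least rank whose ball of radius `layer`
contains `v`. -/
noncomputable def center (v : V) : V :=
  (S.exists_rank_minimal_center v).choose

lemma center_mem (v : V) : S.center v ∈ S.centers :=
  (S.exists_rank_minimal_center v).choose_spec.1

lemma dist_center_le (v : V) : G.dist (S.center v) v ≤ S.layer (S.center v) :=
  (S.exists_rank_minimal_center v).choose_spec.2.1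

lemma rank_center_le {c v : V} (hc : c ∈ S.centers) (hdist : G.dist c v ≤ S.layer c) :
    S.rank (S.center v) ≤ S.rank c :=
  (S.exists_rank_minimal_center v).choose_spec.2.2 c hc hdist

lemma rank_injective : Function.Injective S.rank := fun _ _ h =>
  (Fintype.equivFin V).injective (congrArg Prod.snd (toLex.injective h))

lemma radius_le_of_rank_le {c c' : V} (h : S.rank c ≤ S.rank c') : S.radius c ≤ S.radius c' :=
  Prod.Lex.monotone_fst _ _ h

lemma mem_portals {c v : V} :
    v ∈ S.portals c ↔ G.dist c v ≤ S.layer c + 1 ∧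
      ∃ c' ∈ S.centers, S.rank c' ≤ S.rank c ∧ v ∈ boundaryLayer G c' (S.layer c') := by
  simp [portals]

lemma dist_le_of_mem_portals {c v : V} (hv : v ∈ S.portals c) : G.dist c v ≤ 5 * S.radius c :=
  (S.mem_portals.mp hv).1.trans (S.layer_lt c)

lemma sum_card_hull_le {T X : Finset V} (hT : T ⊆ S.centers)
    (hX : ∀ c ∈ T, distBall G c (S.radius c) ⊆ X) : ∑ c ∈ T, (S.hull c).card ≤ K * X.card := by
  classical
  calc ∑ c ∈ T, (S.hull c).card ≤ ∑ c ∈ T, K * (distBall G c (S.radius c)).card :=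
        Finset.sum_le_sum fun c _ => S.card_distBall_le c
    _ = K * (T.biUnion fun c => distBall G c (S.radius c)).card := by
        rw [← Finset.mul_sum, Finset.card_biUnion (S.pairwiseDisjoint.subset hT)]
    _ ≤ K * X.card := Nat.mul_le_mul_left K (Finset.card_le_card (Finset.biUnion_subset.mpr hX))

lemma card_boundaryLayer_mul_le (c : V) :
    (boundaryLayer G c (S.layer c)).card * r ≤ (S.hull c).card := by
  calc (boundaryLayer G c (S.layer c)).card * r
      ≤ (boundaryLayer G c (S.layer c)).card * S.radius c := Nat.mul_le_mul_left _ (S.le_radius c)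
    _ ≤ (distBall G c (5 * S.radius c)).card := S.card_layer_mul_le c
    _ ≤ (S.hull c).card := Finset.card_le_card fun v hv =>
        mem_distBall.mpr ((mem_distBall.mp hv).trans (by omega))

-- The layers that contribute portals belong to smaller disjoint balls near `c`, all in its hull.
lemma card_portals_mul_le (hG : G.Connected) (c : V) :
    (S.portals c).card * r ≤ K * (S.hull c).card := by
  classical
  let T := S.centers.filter fun c' => S.rank c' ≤ S.rank c ∧ G.dist c c' ≤ 10 * S.radius c
  have hportals : S.portals c ⊆ T.biUnion fun c' => boundaryLayer G c' (S.layer c') := by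
    intro v hv
    obtain ⟨hcv, c', hc', hrank, hv'⟩ := S.mem_portals.mp hv
    refine Finset.mem_biUnion.mpr ⟨c', Finset.mem_filter.mpr ⟨hc', hrank, ?_⟩, hv'⟩
    rw [mem_boundaryLayer, G.dist_comm] at hv'
    have := hG.dist_triangle (u := c) (v := v) (w := c')
    have := S.radius_le_of_rank_le hrank
    have := S.layer_lt c
    have := S.layer_lt c'
    omega
  have hballs : ∀ c' ∈ T, distBall G c' (S.radius c') ⊆ S.hull c := by
    intro c' hc' v hv
    obtain ⟨-, hrank, hcc'⟩ := Finset.mem_filter.mp hc'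
    rw [mem_distBall] at hv
    refine mem_distBall.mpr ?_
    have := hG.dist_triangle (u := c) (v := c') (w := v)
    have := S.radius_le_of_rank_le hrank
    omega
  calc (S.portals c).card * r ≤ (∑ c' ∈ T, (boundaryLayer G c' (S.layer c')).card) * r :=
        Nat.mul_le_mul_right r ((Finset.card_le_card hportals).trans Finset.card_biUnion_le)
    _ = ∑ c' ∈ T, (boundaryLayer G c' (S.layer c')).card * r := Finset.sum_mul ..
    _ ≤ ∑ c' ∈ T, (S.hull c').card := Finset.sum_le_sum fun c' _ => S.card_boundaryLayer_mul_le c'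
    _ ≤ K * (S.hull c).card := S.sum_card_hull_le (Finset.filter_subset _ _) hballs

lemma mem_portals_of_adj (hG : G.Connected) {u v : V} (hadj : G.Adj u v)
    (hrank : S.rank (S.center u) < S.rank (S.center v)) :
    u ∈ S.portals (S.center u) ∧ v ∈ S.portals (S.center v) ∧ v ∈ S.portals (S.center u) := by
  have hout : S.layer (S.center u) < G.dist (S.center u) v := by
    by_contra! hle
    exact hrank.not_ge (S.rank_center_le (S.center_mem u) hle)
  have hstep : G.dist (S.center u) v ≤ G.dist (S.center u) u + 1 :=
    dist_eq_one_iff_adj.mpr hadj ▸ hG.dist_triangle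
  have hu := S.dist_center_le u
  have hv := S.dist_center_le v
  have hulayer : u ∈ boundaryLayer G (S.center u) (S.layer (S.center u)) :=
    mem_boundaryLayer.mpr (by omega)
  have hvlayer : v ∈ boundaryLayer G (S.center u) (S.layer (S.center u)) :=
    mem_boundaryLayer.mpr (by omega)
  exact ⟨S.mem_portals.mpr ⟨by omega, _, S.center_mem u, le_rfl, hulayer⟩,
    S.mem_portals.mpr ⟨by omega, _, S.center_mem u, hrank.le, hvlayer⟩,
    S.mem_portals.mpr ⟨by omega, _, S.center_mem u, le_rfl, hvlayer⟩⟩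

lemma isPortalClustering (hG : G.Connected) {E : Finset (Sym2 V)} {err : V → ℕ}
    (hstar : ∀ c ∈ S.centers, ∀ v ∈ S.hull c, s(c, v) ∈ E)
    (hportals : ∀ c ∈ S.centers, ∀ u ∈ S.portals c, ∀ v ∈ S.portals c,
      ReachesWithin G E u v (G.dist u v + err c)) :
    IsPortalClustering G E S.center err {v | v ∈ S.portals (S.center v)} (5 * R) := by
  have hnear {c v : V} (hc : c ∈ S.centers) (hv : G.dist c v ≤ S.layer c + 1) :
      ReachesWithin G E c v (5 * R) := by
    have := S.layer_lt c
    have := S.radius_le c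
    exact (ReachesWithin.of_mem (hstar c hc v (mem_distBall.mpr (by omega)))).mono (by omega)
  have hcenter (v : V) : ReachesWithin G E (S.center v) v (5 * R) :=
    hnear (S.center_mem v) ((S.dist_center_le v).trans (Nat.le_succ _))
  have hcross {u v : V} (hadj : G.Adj u v) (hrank : S.rank (S.center u) < S.rank (S.center v)) :
      ReachesWithin G E u v (1 + err (S.center u)) := by
    obtain ⟨hu, -, hv⟩ := S.mem_portals_of_adj hG hadj hrank
    simpa only [dist_eq_one_iff_adj.mpr hadj] using hportals _ (S.center_mem u) u hu v hv
  refine ⟨fun v => (hcenter v).symm, fun {u v} hadj => ?_, fun {u v} hadj hne => ?_,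
    fun {u v} hadj hne => ?_, fun {u v} huv hu hv => ?_⟩
  · have huv := hG.dist_triangle (u := S.center u) (v := u) (w := v)
    rw [dist_eq_one_iff_adj.mpr hadj] at huv
    have hv := hnear (S.center_mem u) (huv.trans (Nat.add_le_add_right (S.dist_center_le u) 1))
    exact ((hcenter u).symm.trans hv).mono (by omega)
  · rw [Set.mem_ofPred_eq]
    rcases (S.rank_injective.ne hne).lt_or_gt with hlt | hlt
    · exact (S.mem_portals_of_adj hG hadj hlt).1
    · exact (S.mem_portals_of_adj hG hadj.symm hlt).2.1
  · rcases (S.rank_injective.ne hne).lt_or_gt with hlt | hlt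
    · exact (hcross hadj hlt).mono (by omega)
    · exact (hcross hadj.symm hlt).symm.mono (by omega)
  · rw [Set.mem_ofPred_eq] at hu hv
    exact hportals _ (S.center_mem u) u hu v (huv ▸ hv)

end BallCover

end BallCover

section Recursion

variable {V : Type u} [Fintype V] {G : SimpleGraph V} {K r R : ℕ} {C a : ℝ}

lemma card_sym2_le_sq {α : Type*} (s : Finset α) : s.sym2.card ≤ s.card ^ 2 := by
  classical
  rw [Finset.sym2_eq_image, sq, ← Finset.card_product]
  exact Finset.card_image_le

lemma rpow_le_rpow_sub_one_mul {x m : ℝ} (ha : a ≤ 1) (hx : 0 < x) (hxm : x ≤ m) :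
    m ^ a ≤ x ^ (a - 1) * m := by
  have hm : 0 < m := hx.trans_le hxm
  calc m ^ a = m ^ (a - 1) * m := by rw [Real.rpow_sub_one hm.ne', div_mul_cancel₀ _ hm.ne']
    _ ≤ x ^ (a - 1) * m :=
        mul_le_mul_of_nonneg_right (Real.rpow_le_rpow_of_nonpos hx hxm (by linarith)) hm.le

lemma rpow_sub_one_sq_mul_le_sq {n x : ℝ} (hx : 0 < x) (h : n ≤ x ^ (6 - 4 * a)) :
    ((x ^ 2) ^ (a - 1)) ^ 2 * n ≤ x ^ 2 := by
  have hpow : ((x ^ 2) ^ (a - 1)) ^ 2 = x ^ (4 * a - 4) := by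
    rw [← Real.rpow_natCast, ← Real.rpow_natCast, ← Real.rpow_mul hx.le, ← Real.rpow_mul hx.le]
    congr 1
    push_cast
    ring
  calc ((x ^ 2) ^ (a - 1)) ^ 2 * n ≤ x ^ (4 * a - 4) * x ^ (6 - 4 * a) := by rw [hpow]; gcongr
    _ = x ^ 2 := by
        rw [← Real.rpow_add hx, ← Real.rpow_natCast]
        congr 1
        push_cast
        ring

namespace BallCover

variable (S : BallCover G K r R)

lemma card_portals_sq_le (hG : G.Connected) (hr : r ≠ 0) {c : V}
    (hsmall : (S.hull c).card ≤ r ^ 2) :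
    (S.portals c).card ^ 2 ≤ K ^ 2 * (S.hull c).card := by
  refine Nat.le_of_mul_le_mul_right ?_ (pow_pos (Nat.pos_of_ne_zero hr) 2)
  calc (S.portals c).card ^ 2 * r ^ 2 = ((S.portals c).card * r) ^ 2 := (mul_pow ..).symm
    _ ≤ (K * (S.hull c).card) ^ 2 := Nat.pow_le_pow_left (S.card_portals_mul_le hG c) 2
    _ = K ^ 2 * (S.hull c).card * (S.hull c).card := by ring
    _ ≤ K ^ 2 * (S.hull c).card * r ^ 2 := Nat.mul_le_mul_left _ hsmall

-- A small cluster can afford all pairs of portals; a large one inherits the emulator of its hull.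
lemma exists_portals_emulator (hbound : LinearEmulatorBound.{u} C a) (hC : 0 ≤ C) (ha : a ≤ 1)
    (hG : G.Connected) (hr : r ≠ 0) (c : V) :
    ∃ (E : Finset (Sym2 V)) (k : ℕ), (E.card : ℝ) ≤ ((K : ℝ) ^ 2 + C) * (S.hull c).card ∧
      (k : ℝ) ≤ C * ((r : ℝ) ^ 2) ^ (a - 1) * (S.hull c).card ∧
      ∀ u ∈ S.portals c, ∀ v ∈ S.portals c, ReachesWithin G E u v (G.dist u v + k) := by
  rcases le_total (S.hull c).card (r ^ 2) with hsmall | hlarge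
  · refine ⟨(S.portals c).sym2, 0, ?_, by rw [Nat.cast_zero]; positivity, fun u hu v hv =>
      .of_mem (Finset.mk_mem_sym2_iff.mpr ⟨hu, hv⟩)⟩
    calc ((S.portals c).sym2.card : ℝ) ≤ (K : ℝ) ^ 2 * (S.hull c).card := by
          exact_mod_cast (card_sym2_le_sq _).trans (S.card_portals_sq_le hG hr hsmall)
      _ ≤ ((K : ℝ) ^ 2 + C) * (S.hull c).card := by gcongr; linarith
  · obtain ⟨E, k, hE, hk, hreach⟩ := hbound.exists_distBall_emulator hG c (11 * S.radius c)
    refine ⟨E, k, hE.trans ?_, hk.trans ?_, fun u hu v hv => hreach u v ?_ ?_⟩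
    · change C * ((S.hull c).card : ℝ) ≤ _
      gcongr
      nlinarith
    · rw [mul_assoc]
      exact mul_le_mul_of_nonneg_left
        (rpow_le_rpow_sub_one_mul ha (by positivity) (by exact_mod_cast hlarge)) hC
    · have := S.dist_le_of_mem_portals hu
      omega
    · have := S.dist_le_of_mem_portals hv
      omega

lemma exists_isPortalClustering (hbound : LinearEmulatorBound.{u} C a) (hC : 0 ≤ C) (ha : a ≤ 1)
    (hG : G.Connected) (hr : r ≠ 0) :
    ∃ (E : Finset (Sym2 V)) (err : V → ℕ) (portals : Set V),
      IsPortalClustering G E S.center err portals (5 * R) ∧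
      (E.card : ℝ) ≤ (1 + (K : ℝ) ^ 2 + C) * (K * Fintype.card V) ∧
      ((∑ c, err c : ℕ) : ℝ) ≤ C * ((r : ℝ) ^ 2) ^ (a - 1) * (K * Fintype.card V) := by
  classical
  choose F k hF hk hreach using S.exists_portals_emulator hbound hC ha hG hr
  let star (c : V) : Finset (Sym2 V) := (S.hull c).image fun v => s(c, v)
  let E : Finset (Sym2 V) := S.centers.biUnion fun c => star c ∪ F c
  have hE {c : V} (hc : c ∈ S.centers) : star c ∪ F c ⊆ E :=
    Finset.subset_biUnion_of_mem (fun c => star c ∪ F c) hc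
  have hhull : ((∑ c ∈ S.centers, (S.hull c).card : ℕ) : ℝ) ≤ K * Fintype.card V := by
    exact_mod_cast S.sum_card_hull_le subset_rfl fun c _ => Finset.subset_univ _
  push_cast at hhull
  refine ⟨E, fun c => if c ∈ S.centers then k c else 0, _, S.isPortalClustering hG
    (fun c hc v hv => hE hc (Finset.mem_union_left _ (Finset.mem_image_of_mem _ hv)))
    (fun c hc u hu v hv => ?_), ?_, ?_⟩
  · rw [if_pos hc]
    exact (hreach c u hu v hv).mono_edges (Finset.subset_union_right.trans (hE hc))
  · have hcard (c : V) : ((star c ∪ F c).card : ℝ) ≤ (1 + (K : ℝ) ^ 2 + C) * (S.hull c).card := by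
      have hunion : ((star c ∪ F c).card : ℝ) ≤ (S.hull c).card + (F c).card := by
        exact_mod_cast (Finset.card_union_le _ _).trans
          (Nat.add_le_add_right Finset.card_image_le _)
      linarith [hF c]
    calc (E.card : ℝ) ≤ ∑ c ∈ S.centers, ((star c ∪ F c).card : ℝ) := by
          exact_mod_cast Finset.card_biUnion_le
      _ ≤ (1 + (K : ℝ) ^ 2 + C) * ∑ c ∈ S.centers, ((S.hull c).card : ℝ) := by
          rw [Finset.mul_sum]
          exact Finset.sum_le_sum fun c _ => hcard c
      _ ≤ _ := by gcongr
  · rw [Finset.sum_ite_mem, Finset.univ_inter]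
    push_cast
    calc ∑ c ∈ S.centers, (k c : ℝ)
        ≤ C * ((r : ℝ) ^ 2) ^ (a - 1) * ∑ c ∈ S.centers, ((S.hull c).card : ℝ) := by
          rw [Finset.mul_sum]
          exact Finset.sum_le_sum fun c _ => hk c
      _ ≤ _ := by gcongr

lemma exists_approximatesDist (S : BallCover G K r R) (hbound : LinearEmulatorBound.{u} C a)
    (hC : 0 ≤ C) (ha : a ≤ 1) (hG : G.Connected) (hr : r ≠ 0) :
    ∃ F : Finset (Sym2 V), ApproximatesDist G F (212 * R) ∧
      (F.card : ℝ) * (R + 1) ^ 2 ≤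
        (1 + (K : ℝ) ^ 2 + C) * (K * Fintype.card V) * (R + 1) ^ 2 +
          (C * ((r : ℝ) ^ 2) ^ (a - 1) * (K * Fintype.card V)) ^ 2 := by
  obtain ⟨E, err, portals, hclust, hE, herr⟩ := S.exists_isPortalClustering hbound hC ha hG hr
  obtain ⟨F, hF, hcard⟩ := hclust.exists_approximatesDist hG R
  refine ⟨F, hF.mono (by omega), ?_⟩
  calc (F.card : ℝ) * (R + 1) ^ 2 ≤ E.card * (R + 1) ^ 2 + ((∑ c, err c : ℕ) : ℝ) ^ 2 := by
        exact_mod_cast hcard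
    _ ≤ _ := by gcongr

-- The exponent `6 - 4 * a` is the threshold from which on the shortcuts cost only `O(n)` edges.
theorem exists_approximatesDist_card_le (S : BallCover G K r R)
    (hbound : LinearEmulatorBound.{u} C a) (hC : 0 ≤ C) (ha : a ≤ 1) (hG : G.Connected) (hr : r ≠ 0)
    (hcard : (Fintype.card V : ℝ) ≤ (r : ℝ) ^ (6 - 4 * a)) :
    ∃ F : Finset (Sym2 V), ApproximatesDist G F (212 * R) ∧
      (F.card : ℝ) ≤ ((1 + (K : ℝ) ^ 2 + C) * K + C ^ 2 * K ^ 2) * Fintype.card V := by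
  obtain ⟨F, hF, hFcard⟩ := S.exists_approximatesDist hbound hC ha hG hr
  refine ⟨F, hF, le_of_mul_le_mul_right (hFcard.trans ?_) (by positivity : (0 : ℝ) < (R + 1) ^ 2)⟩
  obtain ⟨v⟩ := hG.nonempty
  have hrR : (r : ℝ) ≤ R + 1 := by
    exact_mod_cast ((S.le_radius v).trans (S.radius_le v)).trans R.le_succ
  have hshortcuts : (C * ((r : ℝ) ^ 2) ^ (a - 1) * (K * Fintype.card V)) ^ 2 ≤
      C ^ 2 * K ^ 2 * Fintype.card V * (R + 1) ^ 2 :=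
    calc (C * ((r : ℝ) ^ 2) ^ (a - 1) * (K * Fintype.card V)) ^ 2
        = C ^ 2 * K ^ 2 * Fintype.card V *
            ((((r : ℝ) ^ 2) ^ (a - 1)) ^ 2 * Fintype.card V) := by ring
      _ ≤ C ^ 2 * K ^ 2 * Fintype.card V * (r : ℝ) ^ 2 := by
          gcongr
          exact rpow_sub_one_sq_mul_le_sq (by positivity) hcard
      _ ≤ C ^ 2 * K ^ 2 * Fintype.card V * (R + 1) ^ 2 := by gcongr
  linarith

end BallCover

end Recursion

section Exponents

/-- Connected graphs on `n` vertices have emulators with `O(n)` edges and additive error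
`O(n ^ a)`. -/
def IsAchievableExponent (a : ℝ) : Prop :=
  ∃ C : ℝ, 0 ≤ C ∧ LinearEmulatorBound.{u} C a

variable {a b : ℝ}

lemma IsAchievableExponent.mono (h : IsAchievableExponent.{u} a) (hab : a ≤ b) :
    IsAchievableExponent.{u} b := by
  obtain ⟨C, hC, hbound⟩ := h
  refine ⟨C, hC, fun V _ G hG => ?_⟩
  obtain ⟨E, k, hE, hk, happrox⟩ := hbound V G hG
  have := hG.nonempty
  have hn : (1 : ℝ) ≤ Fintype.card V := by exact_mod_cast Fintype.card_pos
  exact ⟨E, k, hE, hk.trans (mul_le_mul_of_nonneg_left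
    (Real.rpow_le_rpow_of_exponent_le hn hab) hC), happrox⟩

lemma dist_lt_card {V : Type*} [Fintype V] {G : SimpleGraph V} (hG : G.Connected) (u v : V) :
    G.dist u v < Fintype.card V := by
  obtain ⟨p, hp, hlen⟩ := hG.exists_path_of_dist u v
  exact hlen ▸ hp.length_lt

lemma isAchievableExponent_one : IsAchievableExponent.{u} 1 := by
  classical
  refine ⟨2, zero_le_two, fun V _ G hG => ?_⟩
  obtain ⟨c⟩ := hG.nonempty
  let star : Finset (Sym2 V) := Finset.univ.image fun v => s(c, v)
  have hstar (v : V) : ReachesWithin G star c v (Fintype.card V) :=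
    (ReachesWithin.of_mem (Finset.mem_image_of_mem _ (Finset.mem_univ v))).mono
      (dist_lt_card hG c v).le
  refine ⟨star, 2 * Fintype.card V, ?_, by simp, fun s t => ?_⟩
  · have hcard : (star.card : ℝ) ≤ Fintype.card V := by exact_mod_cast Finset.card_image_le
    linarith [(Fintype.card V).cast_nonneg (α := ℝ)]
  · exact ((hstar s).symm.trans (hstar t)).mono (by omega)

lemma le_two_mul_rpow_of_pow_le {b₀ n r ρ : ℝ} {N : ℕ} (hn : 1 ≤ n) (hN : N ≠ 0)
    (hNb : (N : ℝ)⁻¹ ≤ b - b₀) (hr : r ≤ 2 * n ^ b₀) (hρ : ρ ^ N ≤ n * r ^ N) (hr₀ : 0 ≤ r) :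
    ρ ≤ 2 * n ^ b := by
  have hn₀ : 0 < n := one_pos.trans_le hn
  have hroot : ρ ≤ n ^ (N : ℝ)⁻¹ * r := by
    refine le_of_pow_le_pow_left₀ hN (by positivity) ?_
    rwa [mul_pow, Real.rpow_inv_natCast_pow hn₀.le hN]
  calc ρ ≤ n ^ (N : ℝ)⁻¹ * r := hroot
    _ ≤ n ^ (b - b₀) * (2 * n ^ b₀) := by gcongr
    _ = 2 * n ^ b := by rw [mul_left_comm, ← Real.rpow_add hn₀, sub_add_cancel]

lemma exists_ballCover_of_lt {b₀ : ℝ} (hb₀ : 0 ≤ b₀) (hb : b₀ < b) :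
    ∃ K : ℕ, ∀ (V : Type u) [Fintype V] (G : SimpleGraph V), G.Connected →
      ∃ r R : ℕ, r ≠ 0 ∧ (Fintype.card V : ℝ) ^ b₀ ≤ r ∧ (R : ℝ) ≤ 4 * (Fintype.card V : ℝ) ^ b ∧
        Nonempty (BallCover G K r R) := by
  obtain ⟨N, hN⟩ := exists_nat_one_div_lt (sub_pos.mpr hb)
  refine ⟨11 ^ (N + 1), fun V _ G hG => ?_⟩
  have := hG.nonempty
  have hn : (1 : ℝ) ≤ Fintype.card V := Nat.one_le_cast.mpr Fintype.card_pos
  have hr : 1 ≤ (Fintype.card V : ℝ) ^ b₀ := Real.one_le_rpow hn hb₀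
  have hR : 1 ≤ (Fintype.card V : ℝ) ^ b := Real.one_le_rpow hn (hb₀.trans hb.le)
  have hceil : ⌈(Fintype.card V : ℝ) ^ b₀⌉₊ ≠ 0 := (Nat.ceil_pos.mpr (by positivity)).ne'
  refine ⟨⌈(Fintype.card V : ℝ) ^ b₀⌉₊, ⌈2 * (Fintype.card V : ℝ) ^ b⌉₊, hceil, Nat.le_ceil _, ?_,
    exists_ballCover hG N.succ_ne_zero hceil fun ρ hρ => ?_⟩
  · exact (Nat.ceil_le_two_mul (by linarith)).trans_eq (by ring)
  · have hradius : (ρ : ℝ) ≤ 2 * (Fintype.card V : ℝ) ^ b :=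
      le_two_mul_rpow_of_pow_le hn N.succ_ne_zero (by simpa using hN.le)
        (Nat.ceil_le_two_mul (by linarith)) (by exact_mod_cast hρ) (Nat.cast_nonneg _)
    exact_mod_cast hradius.trans (Nat.le_ceil _)

lemma IsAchievableExponent.of_one_div_lt (h : IsAchievableExponent.{u} a) (ha : a ≤ 1)
    (hb : 1 / (6 - 4 * a) < b) : IsAchievableExponent.{u} b := by
  obtain ⟨C, hC, hbound⟩ := h
  have hden : 0 < 6 - 4 * a := by linarith
  obtain ⟨K, hK⟩ := exists_ballCover_of_lt (by positivity) hb
  let A : ℝ := (1 + (K : ℝ) ^ 2 + C) * K + C ^ 2 * K ^ 2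
  have hA : 0 ≤ A := by positivity
  refine ⟨A + 848, by positivity, fun V _ G hG => ?_⟩
  obtain ⟨r, R, hr, hrn, hR, ⟨S⟩⟩ := hK V G hG
  have hcard : (Fintype.card V : ℝ) ≤ (r : ℝ) ^ (6 - 4 * a) := by
    rwa [← Real.rpow_inv_le_iff_of_pos (Nat.cast_nonneg _) (Nat.cast_nonneg _) hden, ← one_div]
  obtain ⟨F, hF, hFcard⟩ := S.exists_approximatesDist_card_le hbound hC ha hG hr hcard
  refine ⟨F, 212 * R, hFcard.trans ?_, ?_, hF⟩
  · exact mul_le_mul_of_nonneg_right (by linarith) (Nat.cast_nonneg _)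
  · calc ((212 * R : ℕ) : ℝ) ≤ 848 * (Fintype.card V : ℝ) ^ b := by push_cast; linarith
      _ ≤ (A + 848) * (Fintype.card V : ℝ) ^ b := by gcongr; linarith

-- `1 / (3 + √5)` is the smaller root of `4 * x ^ 2 - 6 * x + 1`, the fixed point of
-- `x ↦ 1 / (6 - 4 * x)`.
lemma one_div_lt_of_gt {x : ℝ} (hx : 1 / (3 + √5) < x) (hx1 : x ≤ 1) : 1 / x < 6 - 4 * x := by
  have hsq : √5 ^ 2 = 5 := Real.sq_sqrt (by norm_num)
  have hsqrt : 2 < √5 := by rw [Real.lt_sqrt] <;> norm_num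
  have hroot : 1 / (3 + √5) = (3 - √5) / 4 := by
    rw [div_eq_div_iff (by positivity) (by norm_num)]
    linarith [hsq]
  have hx0 : 0 < x := lt_trans (by positivity) hx
  rw [hroot] at hx
  rw [div_lt_iff₀ hx0]
  nlinarith [mul_pos (sub_pos.mpr hx) (show 0 < (3 + √5) / 4 - x by linarith)]

theorem isAchievableExponent_of_gt (ha : 1 / (3 + √5) < a) : IsAchievableExponent.{u} a := by
  by_contra hnot
  let exponents : Set ℝ := {x | x ≤ 1 ∧ IsAchievableExponent.{u} x}
  have hone : 1 ∈ exponents := ⟨le_rfl, isAchievableExponent_one⟩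
  have hlower : a ∈ lowerBounds exponents := fun x hx =>
    le_of_not_ge fun hxa => hnot (hx.2.mono hxa)
  let α : ℝ := sInf exponents
  have haα : a ≤ α := le_csInf ⟨1, hone⟩ hlower
  have hα : 1 / α < 6 - 4 * α :=
    one_div_lt_of_gt (ha.trans_le haα) (csInf_le ⟨a, hlower⟩ hone)
  have hα₀ : 0 < α := (lt_trans (by positivity) ha).trans_le haα
  obtain ⟨x, ⟨hx1, hx⟩, hxα⟩ :=
    exists_lt_of_csInf_lt ⟨1, hone⟩ (show α < (6 - 1 / α) / 4 by linarith)
  have himproves : 1 / (6 - 4 * x) < α := (one_div_lt (by linarith) hα₀).mpr (by linarith)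
  obtain ⟨b, hxb, hbα⟩ := exists_between himproves
  refine hbα.not_ge (csInf_le ⟨a, hlower⟩ ⟨?_, hx.of_one_div_lt hx1 hxb⟩)
  exact hbα.le.trans (csInf_le ⟨a, hlower⟩ hone)

end Exponents

theorem linear_size_emulator :
    ∀ ε : ℝ, 0 < ε → ∃ C : ℝ, 0 < C ∧
      ∀ n : ℕ, 2 ≤ n → ∀ G : SimpleGraph (Fin n), G.Connected →
        ∃ (H : SimpleGraph (Fin n)) (w : Sym2 (Fin n) → ℕ),
          IsAdditiveEmulator G H w ⌈C * (n : ℝ) ^ (1 / (3 + Real.sqrt 5) + ε)⌉₊ ∧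
          (H.edgeSet.ncard : ℝ) ≤ C * n := by
  intro ε hε
  obtain ⟨C, hC, hbound⟩ := isAchievableExponent_of_gt (lt_add_of_pos_right (1 / (3 + √5)) hε)
  refine ⟨C + 1, by linarith, fun n _ G hG => ?_⟩
  obtain ⟨E, k, hE, hk, happrox⟩ := hbound (Fin n) G hG
  rw [Fintype.card_fin] at hE hk
  refine ⟨fromEdgeSet E, distWeight G, (happrox.mono ?_).isAdditiveEmulator hG, ?_⟩
  · have herr : (k : ℝ) ≤ (C + 1) * (n : ℝ) ^ (1 / (3 + √5) + ε) :=
      hk.trans (mul_le_mul_of_nonneg_right (by linarith) (by positivity))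
    exact_mod_cast herr.trans (Nat.le_ceil _)
  · calc ((fromEdgeSet (E : Set (Sym2 (Fin n)))).edgeSet.ncard : ℝ) ≤ E.card :=
          Nat.cast_le.mpr (ncard_edgeSet_fromEdgeSet_le E)
      _ ≤ C * n := hE
      _ ≤ (C + 1) * n := mul_le_mul_of_nonneg_right (by linarith) n.cast_nonneg
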